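/- Let σ > 0 and N ≥ 2 an integer, assume Π⁺ is continuously differentiable on (m, M) and that the limit Ψ⁺ₓ(M) = lim_{x→M⁻} (d/dx)Ψ⁺(x) exists. Let R : ℝ → [m, M] be a nondecreasing solution of equation (C⁺) with R(x) < M for all x and lim_{x→∞} R(x) = M, and set G = M − R. Then G is regularly varying at ∞ of index ρ⁺ = (Ψ⁺ₓ(M) − 1)/(1 − Ψ⁺ₓ(M)/N), i.e. for every x > 0 one has G(αx)/G(α) → x^{ρ⁺} as α → ∞. -/

import Mathlib

open MeasureTheory Filter Set

/-- Centered Gaussian density with variance `σ²`. -/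
noncomputable def gq (σ z : ℝ) : ℝ :=
  Real.exp (-(z ^ 2) / (2 * σ ^ 2)) / (σ * Real.sqrt (2 * Real.pi))

/-- The averaged kernel `q̄(σ,x,z)`. -/
noncomputable def gqbar (σ x z : ℝ) : ℝ :=
  if x = 0 then gq σ z else (1 / x) * ∫ y in (0:ℝ)..x, gq σ (y - z)

/-- `Φ⁺(y) = E[V·1_{V>y}]`. -/
noncomputable def Phip {Ω : Type*} [MeasurableSpace Ω] (P : Measure Ω) (V : Ω → ℝ) (y : ℝ) : ℝ :=
  ∫ ω in {ω | V ω > y}, V ω ∂P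

/-- `Π⁺(y) = P(V > y)`. -/
noncomputable def Pip {Ω : Type*} [MeasurableSpace Ω] (P : Measure Ω) (V : Ω → ℝ) (y : ℝ) : ℝ :=
  (P {ω | V ω > y}).toReal

/-- `Φ⁻(y) = E[V·1_{V≤y}]`. -/
noncomputable def Phim {Ω : Type*} [MeasurableSpace Ω] (P : Measure Ω) (V : Ω → ℝ) (y : ℝ) : ℝ :=
  ∫ ω in {ω | V ω ≤ y}, V ω ∂P

/-- `Π⁻(y) = P(V ≤ y)`. -/
noncomputable def Pim {Ω : Type*} [MeasurableSpace Ω] (P : Measure Ω) (V : Ω → ℝ) (y : ℝ) : ℝ :=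
  (P {ω | V ω ≤ y}).toReal

/-- `Ψ⁺ = Φ⁺/Π⁺`. -/
noncomputable def Psip {Ω : Type*} [MeasurableSpace Ω] (P : Measure Ω) (V : Ω → ℝ) (y : ℝ) : ℝ :=
  Phip P V y / Pip P V y

/-- `Ψ⁻ = Φ⁻/Π⁻`. -/
noncomputable def Psim {Ω : Type*} [MeasurableSpace Ω] (P : Measure Ω) (V : Ω → ℝ) (y : ℝ) : ℝ :=
  Phim P V y / Pim P V y

/-- `φ⁺_g`. -/
noncomputable def phip {Ω : Type*} [MeasurableSpace Ω] (P : Measure Ω) (V : Ω → ℝ)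
    (σ : ℝ) (g : ℝ → ℝ) (x : ℝ) : ℝ :=
  (∫ z, Phip P V (g z) * gq σ (x - z)) / (∫ z, Pip P V (g z) * gq σ (x - z))

/-- `φ⁻_g`. -/
noncomputable def phim {Ω : Type*} [MeasurableSpace Ω] (P : Measure Ω) (V : Ω → ℝ)
    (σ : ℝ) (g : ℝ → ℝ) (x : ℝ) : ℝ :=
  (∫ z, Phim P V (g z) * gq σ (x - z)) / (∫ z, Pim P V (g z) * gq σ (x - z))

/-- `φ_g`, equal to `φ⁺_g` on `[0,∞)` and `φ⁻_g` on `(−∞,0)`. -/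
noncomputable def phig {Ω : Type*} [MeasurableSpace Ω] (P : Measure Ω) (V : Ω → ℝ)
    (σ : ℝ) (g : ℝ → ℝ) (x : ℝ) : ℝ :=
  if 0 ≤ x then phip P V σ g x else phim P V σ g x

/-- The interior of the support of the law of `V` is `(m, M)` (with `V` bounded). -/
def SuppIoo {Ω : Type*} [MeasurableSpace Ω] (P : Measure Ω) (V : Ω → ℝ) (m M : ℝ) : Prop :=
  m < M ∧ (∀ᵐ ω ∂P, V ω ∈ Set.Icc m M) ∧
    (∀ y < M, 0 < P {ω | V ω > y}) ∧ (∀ y, m < y → 0 < P {ω | V ω ≤ y})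

/-- Equation (E). -/
def SolvesE {Ω : Type*} [MeasurableSpace Ω] (P : Measure Ω) (V : Ω → ℝ)
    (σ : ℝ) (N : ℕ) (F : ℝ → ℝ) : Prop :=
  ∀ x : ℝ, F x =
    ∫ z, ((1 / (N:ℝ)) * gq σ (x - z) + (((N:ℝ) - 1) / (N:ℝ)) * gqbar σ x z) * phig P V σ F z

/-- Equation (C⁺). -/
def SolvesCp {Ω : Type*} [MeasurableSpace Ω] (P : Measure Ω) (V : Ω → ℝ)
    (σ : ℝ) (N : ℕ) (R : ℝ → ℝ) : Prop :=
  ∀ x : ℝ, R x =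
    (∫ z in Set.Ioi (0:ℝ),
      ((1 / (N:ℝ)) * gq σ (x - z) + (((N:ℝ) - 1) / (N:ℝ)) * gqbar σ x z) *
        ∫ y, Psip P V (R y) * gq σ (z - y)) +
    (∫ ω, V ω ∂P) *
      ∫ z in Set.Iio (0:ℝ),
        ((1 / (N:ℝ)) * gq σ (x - z) + (((N:ℝ) - 1) / (N:ℝ)) * gqbar σ x z)

open ProbabilityTheory
open scoped Topology

/-! Put `p = 1 / N`. Equation (C⁺) says that `G = M - R` is the convex combination
`p * W + (1 - p) * B`, where `B` is the running mean of `W` and `W` is obtained by smoothing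
`H = M - Ψ⁺(R)` twice with a Gaussian; moreover `H / G → L = Ψ⁺ₓ(M)`, by l'Hôpital's rule.
As `W` is nonincreasing and nonnegative, `B` is nonincreasing and `x * B x` nondecreasing on
`(0, ∞)`, so `B` varies too slowly for smoothing to affect the asymptotics of ratios to `B`.
Hence, if `W / B` is eventually within `a` of the fixed point `c` of `w ↦ L * (p * w + 1 - p)`, then
`H / B`, and with it `W / B`, is eventually within about `L * p * a` of `c`. Since `L * p < 1`, this
forces `W / B → c`. Finally `W` is the derivative of `x * B x`, so by Karamata `x * B x` is
regularly varying of index `c`, and `B` and `G` have index `c - 1 = (L - 1) / (1 - L / N)`. -/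

/-! ### Regular variation -/

/-- `f` is regularly varying at `∞` of index `ρ`, in Karamata's sense. -/
def IsRegularlyVarying (f : ℝ → ℝ) (ρ : ℝ) : Prop :=
  ∀ x : ℝ, 0 < x → Tendsto (fun α : ℝ => f (α * x) / f α) atTop (𝓝 (x ^ ρ))

namespace IsRegularlyVarying

variable {f g : ℝ → ℝ} {ρ τ : ℝ}

lemma mul (hf : IsRegularlyVarying f ρ) (hg : IsRegularlyVarying g τ) :
    IsRegularlyVarying (fun x => f x * g x) (ρ + τ) := by
  intro x hx
  simpa only [mul_div_mul_comm, Real.rpow_add hx] using (hf x hx).mul (hg x hx)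

lemma congr' (hf : IsRegularlyVarying f ρ) (h : f =ᶠ[atTop] g) : IsRegularlyVarying g ρ := by
  intro x hx
  have h' := (tendsto_id.atTop_mul_const hx).eventually h
  refine (hf x hx).congr' ?_
  filter_upwards [h, h'] with α hα hαx
  simp only [id_eq] at hαx
  rw [hα, hαx]

lemma rpow (r : ℝ) : IsRegularlyVarying (fun x => x ^ r) r := by
  intro x hx
  refine tendsto_const_nhds.congr' ?_
  filter_upwards [eventually_gt_atTop 0] with α hα
  rw [Real.mul_rpow hα.le hx.le, mul_div_cancel_left₀ _ (Real.rpow_pos_of_pos hα r).ne']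

lemma of_tendsto {a : ℝ} (hf : Tendsto f atTop (𝓝 a)) (ha : a ≠ 0) :
    IsRegularlyVarying f 0 := by
  intro x hx
  have h := (hf.comp (tendsto_id.atTop_mul_const hx)).div hf ha
  rwa [div_self ha, ← Real.rpow_zero x] at h

end IsRegularlyVarying

lemma tendsto_comp_add_sub_of_tendsto_deriv {h h' : ℝ → ℝ} {c : ℝ}
    (hd : ∀ᶠ t in atTop, HasDerivAt h (h' t) t) (hlim : Tendsto h' atTop (𝓝 c)) (s : ℝ) :
    Tendsto (fun t => h (t + s) - h t) atTop (𝓝 (c * s)) := by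
  rw [Metric.tendsto_nhds]
  intro ε hε
  set δ := ε / (|s| + 1)
  have hδ : 0 < δ := by positivity
  obtain ⟨T, hT⟩ := eventually_atTop.mp (hd.and (Metric.tendsto_nhds.mp hlim δ hδ))
  filter_upwards [eventually_ge_atTop T, eventually_ge_atTop (T - s)] with t ht hts
  have hbound : ‖(h (t + s) - c * (t + s)) - (h t - c * t)‖ ≤ δ * ‖t + s - t‖ :=
    (convex_Ici T).norm_image_sub_le_of_norm_hasDerivWithin_le
      (f := fun t => h t - c * t) (f' := fun t => h' t - c)
      (fun u hu => ((hT u hu).1.fun_sub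
        (by simpa using (hasDerivAt_id u).const_mul c)).hasDerivWithinAt)
      (fun u hu => (hT u hu).2.le) ht (mem_Ici.mpr (by linarith))
  calc dist (h (t + s) - h t) (c * s)
      = ‖(h (t + s) - c * (t + s)) - (h t - c * t)‖ := by
        rw [Real.dist_eq, Real.norm_eq_abs]; ring_nf
    _ ≤ δ * |s| := by simpa using hbound
    _ < δ * (|s| + 1) := by gcongr; linarith
    _ = ε := div_mul_cancel₀ ε (by positivity)

lemma IsRegularlyVarying.of_tendsto_mul_deriv_div {A A' : ℝ → ℝ} {c : ℝ}
    (hpos : ∀ᶠ x in atTop, 0 < A x) (hd : ∀ᶠ x in atTop, HasDerivAt A (A' x) x)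
    (hlim : Tendsto (fun x => x * A' x / A x) atTop (𝓝 c)) : IsRegularlyVarying A c := by
  intro x hx
  -- In logarithmic coordinates the elasticity `x A'(x) / A(x)` is an ordinary derivative.
  have hderiv : ∀ᶠ t in atTop, HasDerivAt (fun t => Real.log (A (Real.exp t)))
      (Real.exp t * A' (Real.exp t) / A (Real.exp t)) t := by
    filter_upwards [Real.tendsto_exp_atTop.eventually hpos, Real.tendsto_exp_atTop.eventually hd]
      with t hpos hd
    rw [mul_comm]
    exact (hd.comp t (Real.hasDerivAt_exp t)).log hpos.ne'
  have hlog := (tendsto_comp_add_sub_of_tendsto_deriv hderiv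
    (hlim.comp Real.tendsto_exp_atTop) (Real.log x)).comp Real.tendsto_log_atTop
  rw [Real.rpow_def_of_pos hx, mul_comm]
  refine ((Real.continuous_exp.tendsto _).comp hlog).congr' ?_
  filter_upwards [hpos, (tendsto_id.atTop_mul_const hx).eventually hpos, eventually_gt_atTop 0]
    with α hA hAx hα
  simp only [Function.comp_apply, id_eq] at hAx ⊢
  rw [Real.exp_add, Real.exp_log hα, Real.exp_log hx, Real.exp_sub, Real.exp_log hA,
    Real.exp_log hAx]

/-! ### Running means -/

/-- The average of `W` over the interval from `0` to `x`, written as an integral over `[0, 1]`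
so that it takes the value `W 0` at `x = 0`. -/
noncomputable def runningMean (W : ℝ → ℝ) (x : ℝ) : ℝ :=
  ∫ t in (0:ℝ)..1, W (x * t)

section runningMean

variable {W : ℝ → ℝ} {p x : ℝ}

lemma mul_runningMean (W : ℝ → ℝ) (x : ℝ) : x * runningMean W x = ∫ y in (0:ℝ)..x, W y := by
  simpa only [runningMean, mul_zero, mul_one, smul_eq_mul] using
    intervalIntegral.mul_integral_comp_mul_left (a := 0) (b := 1) (f := W) x

lemma intervalIntegrable_comp_mul (hW : Antitone W) (hx : 0 ≤ x) (a b : ℝ) :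
    IntervalIntegrable (fun t => W (x * t)) volume a b :=
  Antitone.intervalIntegrable fun _ _ h => hW (mul_le_mul_of_nonneg_left h hx)

lemma le_runningMean (hW : Antitone W) (hx : 0 ≤ x) : W x ≤ runningMean W x := by
  have h : ∫ _ in (0:ℝ)..1, W x ≤ runningMean W x :=
    intervalIntegral.integral_mono_on zero_le_one (by simp)
      (intervalIntegrable_comp_mul hW hx 0 1) fun t ht => hW (mul_le_of_le_one_right hx ht.2)
  simpa using h

lemma antitoneOn_runningMean (hW : Antitone W) : AntitoneOn (runningMean W) (Ici 0) := by
  intro x hx y hy hxy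
  exact intervalIntegral.integral_mono_on zero_le_one (intervalIntegrable_comp_mul hW hy 0 1)
    (intervalIntegrable_comp_mul hW hx 0 1) fun t ht => hW (mul_le_mul_of_nonneg_right hxy ht.1)

lemma runningMean_const_sub (hW : Continuous W) (M x : ℝ) :
    runningMean (fun y => M - W y) x = M - runningMean W x := by
  have hint : IntervalIntegrable (fun t => W (x * t)) volume 0 1 :=
    (hW.comp (continuous_const_mul x)).intervalIntegrable 0 1
  simp only [runningMean]
  rw [intervalIntegral.integral_sub intervalIntegrable_const hint]
  simp

/-- The convex combination of `W` and its running mean, with weight `p` on `W`; for `p = 1 / N`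
this is the action of the outer kernel of (C⁺) on a Gaussian convolution `W`. -/
noncomputable def blend (p : ℝ) (W : ℝ → ℝ) (x : ℝ) : ℝ :=
  p * W x + (1 - p) * runningMean W x

lemma blend_const_sub (hW : Continuous W) (p M x : ℝ) :
    blend p (fun y => M - W y) x = M - blend p W x := by
  simp only [blend, runningMean_const_sub hW]
  ring

lemma blend_le_runningMean (hp : 0 ≤ p) (hW : Antitone W) (hx : 0 ≤ x) :
    blend p W x ≤ runningMean W x := by
  have h := mul_le_mul_of_nonneg_left (le_runningMean hW hx) hp
  simp only [blend]
  linarith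

lemma blend_div_runningMean (hx : runningMean W x ≠ 0) :
    blend p W x / runningMean W x = p * (W x / runningMean W x) + (1 - p) := by
  simp only [blend]
  field_simp

lemma isRegularlyVarying_blend {c : ℝ} (hW : Continuous W)
    (hpos : ∀ x, 0 < x → 0 < runningMean W x)
    (hc : Tendsto (fun x => W x / runningMean W x) atTop (𝓝 c)) (hne : p * c + (1 - p) ≠ 0) :
    IsRegularlyVarying (blend p W) (c - 1) := by
  set A : ℝ → ℝ := fun x => x * runningMean W x with hA
  have hAderiv : ∀ x, HasDerivAt A (W x) x := fun x => by
    have hAint : A = fun x => ∫ y in (0:ℝ)..x, W y := funext (mul_runningMean W)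
    exact hAint ▸ (hW.integral_hasStrictDerivAt 0 x).hasDerivAt
  have hArv : IsRegularlyVarying A c := by
    refine .of_tendsto_mul_deriv_div (A' := W) ?_ (.of_forall hAderiv) (hc.congr' ?_)
    · filter_upwards [eventually_gt_atTop 0] with x hx using mul_pos hx (hpos x hx)
    · filter_upwards [eventually_gt_atTop 0] with x hx
      rw [hA, mul_div_mul_left _ _ hx.ne']
  have hmean : IsRegularlyVarying (runningMean W) (c - 1) := by
    refine (hArv.mul (.rpow (-1))).congr' ?_
    filter_upwards [eventually_gt_atTop 0] with x hx
    rw [hA, Real.rpow_neg_one, mul_right_comm, mul_inv_cancel₀ hx.ne', one_mul]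
  have hratio : IsRegularlyVarying (fun x => p * (W x / runningMean W x) + (1 - p)) 0 :=
    .of_tendsto ((hc.const_mul p).add_const _) hne
  rw [← zero_add (c - 1)]
  refine (hratio.mul hmean).congr' ?_
  filter_upwards [eventually_gt_atTop 0] with x hx
  rw [← blend_div_runningMean (hpos x hx).ne', div_mul_cancel₀ _ (hpos x hx).ne']

end runningMean

/-! ### Smoothing by a measure -/

/-- The average of the translates of `F` by the points of `ν`, that is, the convolution of `F`
with the measure `ν`. -/
noncomputable def smoothing (ν : Measure ℝ) (F : ℝ → ℝ) (x : ℝ) : ℝ :=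
  ∫ s, F (x - s) ∂ν

/-- The function equal to `F` on `(0, ∞)` and to the constant `K` elsewhere. -/
noncomputable def extendLeft (K : ℝ) (F : ℝ → ℝ) (z : ℝ) : ℝ :=
  if 0 < z then F z else K

/-- Two successive smoothings, with the intermediate function reset to `K` on `(-∞, 0]`; for a
Gaussian `ν` this is the inner function of (C⁺), to which the outer kernel applies `blend`. -/
noncomputable def bismoothing (ν : Measure ℝ) (K : ℝ) (F : ℝ → ℝ) : ℝ → ℝ :=
  smoothing ν (extendLeft K (smoothing ν F))

section extendLeft

variable {F : ℝ → ℝ} {a b K : ℝ}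

lemma extendLeft_mem_Icc (hK : K ∈ Icc a b) (hF : ∀ z, F z ∈ Icc a b) (z : ℝ) :
    extendLeft K F z ∈ Icc a b := by
  unfold extendLeft
  split_ifs
  exacts [hF z, hK]

lemma measurable_extendLeft (hF : Measurable F) : Measurable (extendLeft K F) :=
  Measurable.ite measurableSet_Ioi hF measurable_const

lemma antitone_extendLeft (hF : Antitone F) (hK : ∀ z, F z ≤ K) : Antitone (extendLeft K F) := by
  intro y z hyz
  unfold extendLeft
  split_ifs with hz hy
  exacts [hF hyz, hK z, absurd (‹0 < y›.trans_le hyz) hz, le_rfl]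

lemma extendLeft_const_sub (M K : ℝ) (F : ℝ → ℝ) :
    extendLeft (M - K) (fun z => M - F z) = fun z => M - extendLeft K F z := by
  funext z
  unfold extendLeft
  split_ifs <;> rfl

end extendLeft

section smoothing

variable {ν : Measure ℝ} {F : ℝ → ℝ} {a b K : ℝ}

lemma integrable_comp_const_sub [IsFiniteMeasure ν] (hF : Measurable F)
    (hab : ∀ y, F y ∈ Icc a b) (x : ℝ) : Integrable (fun s => F (x - s)) ν :=
  .of_mem_Icc a b (hF.comp (measurable_id.const_sub x)).aemeasurable
    (.of_forall fun s => hab (x - s))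

lemma measurable_smoothing [SFinite ν] (hF : Measurable F) : Measurable (smoothing ν F) :=
  (StronglyMeasurable.integral_prod_right (f := fun x s => F (x - s))
    (hF.comp (measurable_fst.sub measurable_snd)).stronglyMeasurable).measurable

lemma antitone_smoothing [IsFiniteMeasure ν] (hF : Antitone F) (hab : ∀ y, F y ∈ Icc a b) :
    Antitone (smoothing ν F) := fun x y hxy =>
  integral_mono (integrable_comp_const_sub hF.measurable hab y)
    (integrable_comp_const_sub hF.measurable hab x) fun s => hF (sub_le_sub_right hxy s)

lemma continuous_smoothing [IsFiniteMeasure ν] [NullSingletonClass ν] (hF : Antitone F)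
    (hab : ∀ y, F y ∈ Icc a b) : Continuous (smoothing ν F) := by
  refine continuous_iff_continuousAt.mpr fun x => continuousAt_of_dominated
    (bound := fun _ => max |a| |b|)
    (.of_forall fun y => (integrable_comp_const_sub hF.measurable hab y).aestronglyMeasurable)
    (.of_forall fun y => .of_forall fun s => abs_le_max_abs_abs (hab _).1 (hab _).2)
    (integrable_const _) ?_
  have hnull : ν ((fun s => x - s) ⁻¹' {y | ¬ContinuousAt F y}) = 0 :=
    (hF.countable_not_continuousAt.preimage sub_right_injective).measure_zero ν
  filter_upwards [compl_mem_ae_iff.mpr hnull] with s hs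
  exact ContinuousAt.comp (g := F) (not_not.mp hs) (continuousAt_id.sub_const s)

variable [IsProbabilityMeasure ν]

lemma smoothing_mem_Icc (hF : Measurable F) (hab : ∀ y, F y ∈ Icc a b) (x : ℝ) :
    smoothing ν F x ∈ Icc a b := by
  have hint := integrable_comp_const_sub (ν := ν) hF hab x
  constructor
  · simpa [smoothing] using integral_mono (integrable_const a) hint fun s => (hab (x - s)).1
  · simpa [smoothing] using integral_mono hint (integrable_const b) fun s => (hab (x - s)).2

lemma smoothing_const_sub (hF : Measurable F) (hab : ∀ y, F y ∈ Icc a b) (M : ℝ) :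
    smoothing ν (fun y => M - F y) = fun x => M - smoothing ν F x := by
  funext x
  simp only [smoothing]
  rw [integral_sub (integrable_const M) (integrable_comp_const_sub hF hab x)]
  simp

lemma antitone_extendLeft_smoothing (hF : Antitone F) (haK : ∀ y, F y ∈ Icc a K) :
    Antitone (extendLeft K (smoothing ν F)) :=
  antitone_extendLeft (antitone_smoothing hF haK) fun z => (smoothing_mem_Icc hF.measurable haK z).2

lemma extendLeft_smoothing_mem_Icc (hF : Measurable F) (hab : ∀ y, F y ∈ Icc a b)
    (hK : K ∈ Icc a b) (z : ℝ) : extendLeft K (smoothing ν F) z ∈ Icc a b :=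
  extendLeft_mem_Icc hK (smoothing_mem_Icc hF hab) z

lemma bismoothing_const_sub (hF : Measurable F) (hab : ∀ y, F y ∈ Icc a b) (hK : K ∈ Icc a b)
    (M : ℝ) : bismoothing ν (M - K) (fun y => M - F y) = fun x => M - bismoothing ν K F x := by
  simp only [bismoothing]
  rw [smoothing_const_sub hF hab, extendLeft_const_sub,
    smoothing_const_sub (measurable_extendLeft (measurable_smoothing hF))
      (extendLeft_smoothing_mem_Icc hF hab hK)]

lemma antitone_bismoothing (hF : Antitone F) (haK : ∀ y, F y ∈ Icc a K) :
    Antitone (bismoothing ν K F) :=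
  antitone_smoothing (antitone_extendLeft_smoothing hF haK)
    (extendLeft_smoothing_mem_Icc hF.measurable haK ⟨(haK 0).1.trans (haK 0).2, le_rfl⟩)

lemma continuous_bismoothing [NullSingletonClass ν] (hF : Antitone F)
    (haK : ∀ y, F y ∈ Icc a K) : Continuous (bismoothing ν K F) :=
  continuous_smoothing (antitone_extendLeft_smoothing hF haK)
    (extendLeft_smoothing_mem_Icc hF.measurable haK ⟨(haK 0).1.trans (haK 0).2, le_rfl⟩)

lemma bismoothing_mem_Icc (hF : Measurable F) (hab : ∀ y, F y ∈ Icc a b) (hK : K ∈ Icc a b)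
    (x : ℝ) : bismoothing ν K F x ∈ Icc a b :=
  smoothing_mem_Icc (measurable_extendLeft (measurable_smoothing hF))
    (extendLeft_smoothing_mem_Icc hF hab hK) x

end smoothing

/-! ### Smoothing relative to a slowly decreasing function -/

/-- A positive function on `(0, ∞)` that is nonincreasing while `x ↦ x * B x` is nondecreasing.
Running means of nonnegative nonincreasing functions have this property, and it makes ratios to
`B` insensitive to smoothing. -/
structure SlowlyDecreasing (B : ℝ → ℝ) : Prop where
  pos : ∀ x, 0 < x → 0 < B x
  antitoneOn : AntitoneOn B (Ioi 0)
  monotoneOn_mul : MonotoneOn (fun x => x * B x) (Ioi 0)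

lemma slowlyDecreasing_runningMean {W : ℝ → ℝ} (hW : Antitone W) (hnn : ∀ x, 0 ≤ W x)
    (hpos : ∀ x, 0 < x → 0 < runningMean W x) : SlowlyDecreasing (runningMean W) where
  pos := hpos
  antitoneOn := (antitoneOn_runningMean hW).mono Ioi_subset_Ici_self
  monotoneOn_mul x hx y _ hxy := by
    simp only [mul_runningMean]
    exact intervalIntegral.integral_mono_interval le_rfl (le_of_lt hx) hxy
      (.of_forall hnn) hW.intervalIntegrable

namespace SlowlyDecreasing

variable {B F : ℝ → ℝ} {a b K x s : ℝ}

lemma abs_div_sub_one_le (hB : SlowlyDecreasing B) {u v : ℝ} (hu : 0 < u) (hv : 0 < v) :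
    |B u / B v - 1| ≤ |v - u| / u := by
  have hBv := hB.pos v hv
  rw [div_sub_one hBv.ne', abs_div, abs_of_pos hBv, div_le_div_iff₀ hBv hu]
  rcases le_total u v with huv | hvu
  · have hanti := hB.antitoneOn hu hv huv
    have hmono : u * B u ≤ v * B v := hB.monotoneOn_mul hu hv huv
    rw [abs_of_nonneg (sub_nonneg.mpr hanti), abs_of_nonneg (sub_nonneg.mpr huv)]
    linarith
  · have hanti := hB.antitoneOn hv hu hvu
    have hmono : v * B v ≤ u * B u := hB.monotoneOn_mul hv hu hvu
    rw [abs_of_nonpos (sub_nonpos.mpr hanti), abs_of_nonpos (sub_nonpos.mpr hvu)]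
    linarith

lemma div_le_mul (hB : SlowlyDecreasing B) (hK : 0 ≤ K) (hx : 1 ≤ x) : K / B x ≤ K / B 1 * x := by
  have hx0 : 0 < x := one_pos.trans_le hx
  have hmono : 1 * B 1 ≤ x * B x := hB.monotoneOn_mul (mem_Ioi.mpr one_pos) hx0 hx
  rw [div_mul_eq_mul_div, div_le_div_iff₀ (hB.pos x hx0) (hB.pos 1 one_pos), mul_assoc]
  exact mul_le_mul_of_nonneg_left (by linarith) hK

lemma abs_comp_sub_div_sub_le_of_near (hB : SlowlyDecreasing B) (hx : 0 < x) (hs : |s| ≤ x / 2)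
    (ha : |F (x - s) / B (x - s) - b| ≤ a) :
    |F (x - s) / B x - b| ≤ a + (a + |b|) / x * (1 + s ^ 2) := by
  obtain ⟨-, hs'⟩ := abs_le.mp hs
  have hy : 0 < x - s := by linarith
  set r := B (x - s) / B x with hr
  have hr1 : |r - 1| ≤ (1 + s ^ 2) / x := calc
    |r - 1| ≤ |x - (x - s)| / (x - s) := hB.abs_div_sub_one_le hy hx
    _ ≤ |s| / (x / 2) := by
      rw [sub_sub_cancel]
      gcongr
      linarith
    _ ≤ (1 + s ^ 2) / x := by
      rw [← div_mul, div_mul_eq_mul_div]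
      gcongr
      nlinarith [sq_nonneg (|s| - 1), sq_abs s]
  have ha0 : 0 ≤ a := (abs_nonneg _).trans ha
  have hsplit : F (x - s) / B x - b =
      (F (x - s) / B (x - s) - b) + ((F (x - s) / B (x - s) - b) + b) * (r - 1) := by
    have h1 := (hB.pos x hx).ne'
    have h2 := (hB.pos _ hy).ne'
    rw [hr]
    field_simp
    ring
  calc |F (x - s) / B x - b|
      ≤ a + (a + |b|) * |r - 1| := by
        rw [hsplit]
        refine (abs_add_le _ _).trans ?_
        rw [abs_mul]
        gcongr
        exact (abs_add_le _ _).trans (by gcongr)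
    _ ≤ a + (a + |b|) * ((1 + s ^ 2) / x) := by gcongr
    _ = a + (a + |b|) / x * (1 + s ^ 2) := by ring

lemma abs_comp_sub_div_sub_le_of_far (hB : SlowlyDecreasing B) (hx : 1 ≤ x) (hs : x / 2 ≤ |s|)
    (hK : |F (x - s)| ≤ K) :
    |F (x - s) / B x - b| ≤ (4 * (K / B 1) + |b|) / x * (1 + s ^ 2) := by
  have hx0 : 0 < x := one_pos.trans_le hx
  have hK0 : 0 ≤ K := (abs_nonneg _).trans hK
  have hBx := hB.pos x hx0
  have hxs : x ≤ 1 + s ^ 2 := by nlinarith [sq_nonneg (|s| - 1), sq_abs s]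
  have hx2s : x ^ 2 ≤ 4 * (1 + s ^ 2) := by nlinarith [sq_abs s]
  calc |F (x - s) / B x - b|
      ≤ |F (x - s) / B x| + |b| := abs_sub _ _
    _ ≤ K / B 1 * x + |b| := by
        gcongr
        rw [abs_div, abs_of_pos hBx]
        exact (by gcongr : _ ≤ K / B x).trans (hB.div_le_mul hK0 hx)
    _ = (K / B 1 * x ^ 2 + |b| * x) / x := by field_simp
    _ ≤ (K / B 1 * (4 * (1 + s ^ 2)) + |b| * (1 + s ^ 2)) / x := by
        have := (hB.pos 1 one_pos).le
        gcongr
    _ = (4 * (K / B 1) + |b|) / x * (1 + s ^ 2) := by ring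

lemma abs_comp_sub_div_sub_le (hB : SlowlyDecreasing B) (hK : ∀ y, |F y| ≤ K) {Y : ℝ}
    (ha : ∀ y ≥ Y, |F y / B y - b| ≤ a) (hx : 1 ≤ x) (hxY : 2 * Y ≤ x) (s : ℝ) :
    |F (x - s) / B x - b| ≤ a + (a + |b| + 4 * (K / B 1)) / x * (1 + s ^ 2) := by
  have hx0 : 0 < x := one_pos.trans_le hx
  have ha0 : 0 ≤ a := (abs_nonneg _).trans (ha Y le_rfl)
  have hKB : 0 ≤ K / B 1 := div_nonneg ((abs_nonneg _).trans (hK 0)) (hB.pos 1 one_pos).le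
  rcases le_total |s| (x / 2) with hs | hs
  · refine (hB.abs_comp_sub_div_sub_le_of_near hx0 hs
      (ha _ (by linarith [(abs_le.mp hs).2]))).trans ?_
    have hcoef : a + |b| ≤ a + |b| + 4 * (K / B 1) := by linarith
    gcongr
  · refine (hB.abs_comp_sub_div_sub_le_of_far hx hs (hK _)).trans (le_add_of_nonneg_of_le ha0 ?_)
    have hcoef : 4 * (K / B 1) + |b| ≤ a + |b| + 4 * (K / B 1) := by linarith
    gcongr

variable {ν : Measure ℝ} [IsProbabilityMeasure ν]

lemma eventually_abs_smoothing_div_sub_le (hB : SlowlyDecreasing B)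
    (hν : Integrable (fun s => s ^ 2) ν) (hF : Measurable F) (hK : ∀ y, |F y| ≤ K)
    (ha : ∀ᶠ y in atTop, |F y / B y - b| ≤ a) {ε : ℝ} (hε : 0 < ε) :
    ∀ᶠ x in atTop, |smoothing ν F x / B x - b| ≤ a + ε := by
  obtain ⟨Y, hY⟩ := eventually_atTop.mp ha
  set C := a + |b| + 4 * (K / B 1)
  set D := ∫ s, (1 + s ^ 2) ∂ν
  have hν' : Integrable (fun s => 1 + s ^ 2) ν := (integrable_const 1).add hν
  have htail : ∀ᶠ x in atTop, C / x * D < ε :=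
    (((tendsto_const_nhds (x := C)).div_atTop tendsto_id).mul_const D).eventually_lt_const
      (by simpa using hε)
  filter_upwards [eventually_ge_atTop 1, eventually_ge_atTop (2 * Y), htail] with x hx hxY htail
  have hint : Integrable (fun s => F (x - s)) ν :=
    integrable_comp_const_sub hF (fun y => abs_le.mp (hK y)) x
  have hmean : smoothing ν F x / B x - b = ∫ s, (F (x - s) / B x - b) ∂ν := by
    rw [integral_sub (hint.div_const _) (integrable_const b), integral_div]
    simp [smoothing]
  calc |smoothing ν F x / B x - b|
      ≤ ∫ s, (a + C / x * (1 + s ^ 2)) ∂ν := by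
        rw [hmean, ← Real.norm_eq_abs]
        exact norm_integral_le_of_norm_le ((integrable_const a).add (hν'.const_mul _))
          (.of_forall (hB.abs_comp_sub_div_sub_le hK hY hx hxY))
    _ = a + C / x * D := by
        rw [integral_add (integrable_const a) (hν'.const_mul _), integral_const_mul]
        simp [D]
    _ ≤ a + ε := by linarith

lemma eventually_abs_bismoothing_div_sub_le (hB : SlowlyDecreasing B)
    (hν : Integrable (fun s => s ^ 2) ν) (hF : Measurable F) (hF0K : ∀ y, F y ∈ Icc 0 K)
    (ha : ∀ᶠ y in atTop, |F y / B y - b| ≤ a) {ε : ℝ} (hε : 0 < ε) :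
    ∀ᶠ x in atTop, |bismoothing ν K F x / B x - b| ≤ a + ε := by
  have habs {G : ℝ → ℝ} (hG : ∀ y, G y ∈ Icc 0 K) (y : ℝ) : |G y| ≤ K :=
    (abs_of_nonneg (hG y).1).trans_le (hG y).2
  have hK : K ∈ Icc 0 K := ⟨(hF0K 0).1.trans (hF0K 0).2, le_rfl⟩
  have hinner : ∀ᶠ x in atTop, |extendLeft K (smoothing ν F) x / B x - b| ≤ a + ε / 2 := by
    filter_upwards [hB.eventually_abs_smoothing_div_sub_le hν hF (habs hF0K) ha (half_pos hε),
      eventually_gt_atTop 0] with x hx hx0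
    rwa [extendLeft, if_pos hx0]
  have houter := hB.eventually_abs_smoothing_div_sub_le hν
    (measurable_extendLeft (measurable_smoothing hF))
    (habs (extendLeft_smoothing_mem_Icc hF hF0K hK)) hinner (half_pos hε)
  rwa [add_assoc, add_halves] at houter

end SlowlyDecreasing

/-! ### The contraction argument -/

lemma tendsto_of_eventually_contraction {α : Type*} {l : Filter α} [l.NeBot] {f : α → ℝ} {c q : ℝ}
    (hq0 : 0 ≤ q) (hq1 : q < 1) (hbdd : ∃ a, ∀ᶠ x in l, |f x - c| ≤ a)
    (hcontr : ∀ a, (∀ᶠ x in l, |f x - c| ≤ a) → ∀ ε > 0, ∀ᶠ x in l, |f x - c| ≤ q * a + ε) :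
    Tendsto f l (𝓝 c) := by
  set S := {a | ∀ᶠ x in l, |f x - c| ≤ a}
  have hSbdd : BddBelow S := ⟨0, fun a ha => by
    obtain ⟨x, hx⟩ := Eventually.exists ha
    exact (abs_nonneg _).trans hx⟩
  have hinf : sInf S ≤ q * sInf S := by
    refine le_of_forall_pos_le_add fun ε hε => ?_
    obtain ⟨a, ha, haε⟩ := exists_lt_of_csInf_lt hbdd (lt_add_of_pos_right (sInf S) (half_pos hε))
    calc sInf S ≤ q * a + ε / 2 := csInf_le hSbdd (hcontr a ha _ (half_pos hε))
      _ ≤ q * (sInf S + ε / 2) + ε / 2 := by gcongr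
      _ ≤ q * sInf S + ε := by nlinarith
  have hinf0 : sInf S ≤ 0 := by nlinarith
  rw [Metric.tendsto_nhds]
  intro ε hε
  obtain ⟨a, ha, haε⟩ := exists_lt_of_csInf_lt hbdd (hinf0.trans_lt hε)
  filter_upwards [ha] with x hx using (Real.dist_eq _ _).trans_lt (hx.trans_lt haε)

section fixedPoint

variable {H W : ℝ → ℝ} {K L a c p x : ℝ}

lemma one_sub_mul_pos (hp : 0 ≤ p) (hLp : |L| * p < 1) : 0 < 1 - p * L := by
  have hle : L * p ≤ |L| * p := mul_le_mul_of_nonneg_right (le_abs_self L) hp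
  linarith

lemma abs_div_runningMean_sub_le (hp0 : 0 ≤ p) (hp1 : p < 1)
    (hw : W x / runningMean W x ∈ Icc 0 1) (hB : runningMean W x ≠ 0)
    (ha : |W x / runningMean W x - c| ≤ a) :
    |H x / runningMean W x - L * (p * c + (1 - p))| ≤
      |H x / blend p W x - L| + |L| * p * a := by
  set w := W x / runningMean W x
  have hblend : blend p W x / runningMean W x = p * w + (1 - p) := blend_div_runningMean hB
  have hpos : 0 < p * w + (1 - p) := add_pos_of_nonneg_of_pos (mul_nonneg hp0 hw.1) (by linarith)
  have hle : p * w + (1 - p) ≤ 1 := by nlinarith [hw.2]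
  have hne : blend p W x ≠ 0 := fun h => hpos.ne' (by rw [← hblend, h, zero_div])
  calc |H x / runningMean W x - L * (p * c + (1 - p))|
      = |(H x / blend p W x - L) * (p * w + (1 - p)) + L * p * (w - c)| := by
        rw [← div_mul_div_cancel₀ hne, hblend]
        ring_nf
    _ ≤ |H x / blend p W x - L| * (p * w + (1 - p)) + |L| * p * |w - c| := by
        refine (abs_add_le _ _).trans_eq ?_
        rw [abs_mul, abs_mul, abs_mul, abs_of_pos hpos, abs_of_nonneg hp0]
    _ ≤ |H x / blend p W x - L| + |L| * p * a := by
        gcongr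
        exact mul_le_of_le_one_right (abs_nonneg _) hle

variable {ν : Measure ℝ} [IsProbabilityMeasure ν]

lemma tendsto_bismoothing_div_runningMean (hν : Integrable (fun s => s ^ 2) ν)
    (hH : Antitone H) (hHK : ∀ y, H y ∈ Icc 0 K) (hp0 : 0 ≤ p) (hp1 : p < 1) (hLp : |L| * p < 1)
    (hB : SlowlyDecreasing (runningMean (bismoothing ν K H)))
    (hlim : Tendsto (fun x => H x / blend p (bismoothing ν K H) x) atTop (𝓝 L)) :
    Tendsto (fun x => bismoothing ν K H x / runningMean (bismoothing ν K H) x) atTop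
      (𝓝 (L * (1 - p) / (1 - p * L))) := by
  set W := bismoothing ν K H
  set B := runningMean W
  set c := L * (1 - p) / (1 - p * L)
  have hfix : L * (p * c + (1 - p)) = c := by
    have hc : c * (1 - p * L) = L * (1 - p) := div_mul_cancel₀ _ (one_sub_mul_pos hp0 hLp).ne'
    linear_combination -hc
  have hratio : ∀ x, 0 < x → W x / B x ∈ Icc 0 1 := fun x hx => by
    have hW0 := (bismoothing_mem_Icc (ν := ν) hH.measurable hHK
      ⟨(hHK 0).1.trans (hHK 0).2, le_rfl⟩ x).1
    exact ⟨div_nonneg hW0 (hB.pos x hx).le,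
      div_le_one_of_le₀ (le_runningMean (antitone_bismoothing hH hHK) hx.le) (hB.pos x hx).le⟩
  refine tendsto_of_eventually_contraction (q := |L| * p) (by positivity) hLp ?_ ?_
  · refine ⟨1 + |c|, ?_⟩
    filter_upwards [eventually_gt_atTop 0] with x hx
    refine (abs_sub _ _).trans ?_
    rw [abs_of_nonneg (hratio x hx).1]
    gcongr
    exact (hratio x hx).2
  · intro a ha ε hε
    have hHB : ∀ᶠ x in atTop, |H x / B x - c| ≤ |L| * p * a + ε / 2 := by
      filter_upwards [ha, eventually_gt_atTop 0,
        Metric.tendsto_nhds.mp hlim (ε / 2) (half_pos hε)] with x hxa hx hxL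
      have h := abs_div_runningMean_sub_le (H := H) (L := L) hp0 hp1 (hratio x hx)
        (hB.pos x hx).ne' hxa
      rw [hfix] at h
      rw [Real.dist_eq] at hxL
      linarith
    simpa only [add_assoc, add_halves] using
      hB.eventually_abs_bismoothing_div_sub_le hν hH.measurable hHK hHB (half_pos hε)

theorem isRegularlyVarying_blend_bismoothing [NullSingletonClass ν]
    (hν : Integrable (fun s => s ^ 2) ν) (hH : Antitone H) (hHK : ∀ y, H y ∈ Icc 0 K)
    (hp0 : 0 ≤ p) (hp1 : p < 1) (hLp : |L| * p < 1)
    (hpos : ∀ x, 0 < x → 0 < blend p (bismoothing ν K H) x)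
    (hlim : Tendsto (fun x => H x / blend p (bismoothing ν K H) x) atTop (𝓝 L)) :
    IsRegularlyVarying (blend p (bismoothing ν K H)) ((L - 1) / (1 - p * L)) := by
  have hanti : Antitone (bismoothing ν K H) := antitone_bismoothing hH hHK
  have hmean : ∀ x, 0 < x → 0 < runningMean (bismoothing ν K H) x := fun x hx =>
    (hpos x hx).trans_le (blend_le_runningMean hp0 hanti hx.le)
  have hB := slowlyDecreasing_runningMean hanti (fun x => (bismoothing_mem_Icc hH.measurable hHK
    ⟨(hHK 0).1.trans (hHK 0).2, le_rfl⟩ x).1) hmean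
  have hden := one_sub_mul_pos hp0 hLp
  have hγ : p * (L * (1 - p) / (1 - p * L)) + (1 - p) = (1 - p) / (1 - p * L) := by
    rw [← mul_div_assoc, div_add' _ _ _ hden.ne']
    ring_nf
  have hindex : (L - 1) / (1 - p * L) = L * (1 - p) / (1 - p * L) - 1 := by
    rw [div_sub_one hden.ne']
    ring_nf
  rw [hindex]
  refine isRegularlyVarying_blend (continuous_bismoothing hH hHK) hmean
    (tendsto_bismoothing_div_runningMean hν hH hHK hp0 hp1 hLp hB hlim) ?_
  rw [hγ]
  exact (div_pos (by linarith) hden).ne'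

end fixedPoint

/-! ### The Gaussian kernel and equation (C⁺) -/

/-- The law of a centered Gaussian variable with variance `σ ^ 2`, whose density is `gq σ`. -/
noncomputable abbrev centeredGaussian (σ : ℝ) : Measure ℝ :=
  gaussianReal 0 (σ ^ 2).toNNReal

section gaussianKernel

variable {σ a b : ℝ} {F : ℝ → ℝ}

lemma gq_eq_gaussianPDFReal (hσ : 0 < σ) : gq σ = gaussianPDFReal 0 (σ ^ 2).toNNReal := by
  funext z
  rw [gq, gaussianPDFReal, sub_zero, Real.coe_toNNReal _ (sq_nonneg σ),
    Real.sqrt_mul (by positivity : 0 ≤ 2 * Real.pi), Real.sqrt_sq hσ.le, mul_comm σ, div_eq_inv_mul]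

lemma integrable_sq_centeredGaussian (σ : ℝ) : Integrable (fun s => s ^ 2) (centeredGaussian σ) :=
  (memLp_id_gaussianReal 2).integrable_sq

lemma nullSingletonClass_centeredGaussian (hσ : 0 < σ) :
    NullSingletonClass (centeredGaussian σ) :=
  nullSingletonClass_gaussianReal (Real.toNNReal_pos.mpr (by positivity)).ne'

lemma integral_mul_gq (hσ : 0 < σ) (F : ℝ → ℝ) (x : ℝ) :
    ∫ y, F y * gq σ (x - y) = smoothing (centeredGaussian σ) F x := by
  have hv : (σ ^ 2).toNNReal ≠ 0 := (Real.toNNReal_pos.mpr (by positivity)).ne'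
  rw [smoothing, integral_gaussianReal_eq_integral_smul hv, ← gq_eq_gaussianPDFReal hσ,
    ← integral_sub_left_eq_self _ volume x]
  simp only [sub_sub_cancel, smul_eq_mul, mul_comm]

lemma gqbar_eq_runningMean (σ x z : ℝ) : gqbar σ x z = runningMean (fun y => gq σ (y - z)) x := by
  rw [gqbar]
  split_ifs with hx
  · simp [runningMean, hx, gq]
  · rw [← mul_runningMean, one_div, inv_mul_cancel_left₀ hx]

lemma integrable_comp_mul_sub {g : ℝ → ℝ} (hg : Integrable g) (hgm : Measurable g)
    (μ : Measure ℝ) [IsFiniteMeasure μ] (x : ℝ) :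
    Integrable (fun q : ℝ × ℝ => g (x * q.1 - q.2)) (μ.prod volume) := by
  refine (integrable_prod_iff (hgm.comp (by fun_prop)).aestronglyMeasurable).mpr
    ⟨.of_forall fun t => hg.comp_sub_left (x * t), ?_⟩
  exact (integrable_const (∫ z, ‖g z‖)).congr
    (.of_forall fun t => (integral_sub_left_eq_self (fun z => ‖g z‖) volume (x * t)).symm)

lemma continuous_gq (σ : ℝ) : Continuous (gq σ) := by
  unfold gq
  fun_prop

lemma integrable_gq (hσ : 0 < σ) : Integrable (gq σ) :=
  gq_eq_gaussianPDFReal hσ ▸ integrable_gaussianPDFReal 0 _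

variable (hσ : 0 < σ) (hF : Measurable F) (hab : ∀ z, F z ∈ Icc a b) (x : ℝ)
include hσ hF hab

lemma integrable_gq_mul : Integrable (fun z => gq σ (x - z) * F z) :=
  ((integrable_gq hσ).comp_sub_left x).mul_bdd hF.aestronglyMeasurable
    (.of_forall fun z => abs_le_max_abs_abs (hab z).1 (hab z).2)

lemma integrable_gq_mul_prod :
    Integrable (fun q : ℝ × ℝ => gq σ (x * q.1 - q.2) * F q.2)
      ((volume.restrict (Ioc 0 1)).prod volume) :=
  (integrable_comp_mul_sub (integrable_gq hσ) (continuous_gq σ).measurable _ x).mul_bdd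
    (hF.comp measurable_snd).aestronglyMeasurable
    (.of_forall fun q => abs_le_max_abs_abs (hab q.2).1 (hab q.2).2)

omit hσ hF hab in
lemma gqbar_mul_eq_setIntegral (z : ℝ) :
    gqbar σ x z * F z = ∫ t in Ioc (0:ℝ) 1, gq σ (x * t - z) * F z := by
  rw [gqbar_eq_runningMean, runningMean, intervalIntegral.integral_of_le zero_le_one,
    integral_mul_const]

lemma integrable_gqbar_mul : Integrable (fun z => gqbar σ x z * F z) := by
  simp only [gqbar_mul_eq_setIntegral]
  exact (integrable_gq_mul_prod hσ hF hab x).integral_prod_right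

lemma integral_gqbar_mul :
    ∫ z, gqbar σ x z * F z = runningMean (smoothing (centeredGaussian σ) F) x := by
  simp only [gqbar_mul_eq_setIntegral]
  rw [← integral_integral_swap (integrable_gq_mul_prod hσ hF hab x), runningMean,
    intervalIntegral.integral_of_le zero_le_one]
  simp only [← integral_mul_gq hσ, mul_comm]

lemma integrable_kernel_mul (p : ℝ) :
    Integrable (fun z => (p * gq σ (x - z) + (1 - p) * gqbar σ x z) * F z) := by
  simp only [add_mul, mul_assoc]
  exact ((integrable_gq_mul hσ hF hab x).const_mul p).add
    ((integrable_gqbar_mul hσ hF hab x).const_mul (1 - p))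

lemma integral_kernel_mul (p : ℝ) :
    ∫ z, (p * gq σ (x - z) + (1 - p) * gqbar σ x z) * F z =
      blend p (smoothing (centeredGaussian σ) F) x := by
  simp only [add_mul, mul_assoc]
  rw [integral_add ((integrable_gq_mul hσ hF hab x).const_mul p)
      ((integrable_gqbar_mul hσ hF hab x).const_mul (1 - p)),
    integral_const_mul, integral_const_mul, integral_gqbar_mul hσ hF hab, blend,
    ← integral_mul_gq hσ]
  simp only [mul_comm]

end gaussianKernel

section SolvesCp

variable {Ω : Type*} [MeasurableSpace Ω] {P : Measure Ω} {V : Ω → ℝ} {σ a b : ℝ} {N : ℕ}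
  {R : ℝ → ℝ}

lemma integral_kernel_mul_extendLeft {F : ℝ → ℝ} {K : ℝ} (hσ : 0 < σ) (hF : Measurable F)
    (hab : ∀ z, F z ∈ Icc a b) (hK : K ∈ Icc a b) (p x : ℝ) :
    ∫ z, (p * gq σ (x - z) + (1 - p) * gqbar σ x z) * extendLeft K F z =
      (∫ z in Ioi 0, (p * gq σ (x - z) + (1 - p) * gqbar σ x z) * F z) +
        K * ∫ z in Iio 0, (p * gq σ (x - z) + (1 - p) * gqbar σ x z) := by
  have hint := integrable_kernel_mul hσ (measurable_extendLeft hF) (extendLeft_mem_Icc hK hab) x p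
  rw [← intervalIntegral.integral_Iic_add_Ioi (b := 0) hint.integrableOn hint.integrableOn,
    add_comm, ← integral_const_mul, integral_Iic_eq_integral_Iio]
  congr 1
  · exact setIntegral_congr_fun measurableSet_Ioi fun z hz => by
      rw [extendLeft, if_pos (mem_Ioi.mp hz)]
  · exact setIntegral_congr_fun measurableSet_Iio fun z hz => by
      rw [extendLeft, if_neg (not_lt_of_gt hz), mul_comm]

lemma SolvesCp.eq_blend (hR : SolvesCp P V σ N R) (hσ : 0 < σ) (hN : N ≠ 0)
    (hΨ : Measurable fun y => Psip P V (R y)) (hab : ∀ y, Psip P V (R y) ∈ Icc a b)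
    (hV : ∫ ω, V ω ∂P ∈ Icc a b) :
    R = blend (1 / N) (bismoothing (centeredGaussian σ) (∫ ω, V ω ∂P) fun y => Psip P V (R y)) := by
  have hweight : ((N : ℝ) - 1) / N = 1 - 1 / N := by
    rw [sub_div, div_self (Nat.cast_ne_zero.mpr hN)]
  funext x
  rw [hR x, hweight]
  simp only [integral_mul_gq hσ]
  rw [← integral_kernel_mul_extendLeft hσ (measurable_smoothing hΨ) (smoothing_mem_Icc hΨ hab) hV,
    integral_kernel_mul hσ (measurable_extendLeft (measurable_smoothing hΨ))
      (extendLeft_smoothing_mem_Icc hΨ hab hV), bismoothing]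

lemma SolvesCp.const_sub_eq_blend {M : ℝ} (hR : SolvesCp P V σ N R) (hσ : 0 < σ) (hN : N ≠ 0)
    (hΨ : Monotone fun y => Psip P V (R y))
    (hmem : ∀ y, Psip P V (R y) ∈ Icc (∫ ω, V ω ∂P) M) :
    (fun x => M - R x) = blend (1 / N) (bismoothing (centeredGaussian σ) (M - ∫ ω, V ω ∂P)
      fun y => M - Psip P V (R y)) := by
  have hnull := nullSingletonClass_centeredGaussian hσ
  set E := ∫ ω, V ω ∂P
  have hE : E ∈ Icc E M := ⟨le_rfl, (hmem 0).1.trans (hmem 0).2⟩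
  have hbis := bismoothing_const_sub (ν := centeredGaussian σ) hΨ.measurable hmem hE M
  have hcont : Continuous (bismoothing (centeredGaussian σ) E fun y => Psip P V (R y)) := by
    have h := (continuous_sub_left M).comp
      (continuous_bismoothing (ν := centeredGaussian σ) (K := M - E) (a := 0)
        (fun _ _ hxy => sub_le_sub_left (hΨ hxy) M)
        fun y => ⟨sub_nonneg.mpr (hmem y).2, sub_le_sub_left (hmem y).1 M⟩)
    simpa only [hbis, Function.comp_def, sub_sub_cancel] using h
  funext x
  rw [hbis, blend_const_sub hcont, ← congrFun (hR.eq_blend hσ hN hΨ.measurable hmem hE) x]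

end SolvesCp

/-! ### The truncated mean `Ψ⁺` -/

section truncatedMean

variable {Ω : Type*} [MeasurableSpace Ω] {P : Measure Ω} {V : Ω → ℝ} {M L y z c : ℝ}

lemma nullMeasurableSet_setOf_gt (hV : Integrable V P) (y : ℝ) :
    NullMeasurableSet {ω | V ω > y} P :=
  nullMeasurableSet_lt aemeasurable_const hV.aemeasurable

variable [IsFiniteMeasure P]

lemma setIntegral_le_mul_measureReal (hV : Integrable V P) {T : Set Ω}
    (h : ∀ᵐ ω ∂P.restrict T, V ω ≤ c) : ∫ ω in T, V ω ∂P ≤ c * P.real T := calc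
  ∫ ω in T, V ω ∂P ≤ ∫ _ in T, c ∂P := integral_mono_ae hV.integrableOn (integrable_const c) h
  _ = c * P.real T := by rw [setIntegral_const, smul_eq_mul, mul_comm]

lemma mul_measureReal_le_setIntegral (hV : Integrable V P) {T : Set Ω}
    (h : ∀ᵐ ω ∂P.restrict T, c ≤ V ω) : c * P.real T ≤ ∫ ω in T, V ω ∂P := calc
  c * P.real T = ∫ _ in T, c ∂P := by rw [setIntegral_const, smul_eq_mul, mul_comm]
  _ ≤ ∫ ω in T, V ω ∂P := integral_mono_ae (integrable_const c) hV.integrableOn h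

lemma Pip_pos (h : 0 < P {ω | V ω > y}) : 0 < Pip P V y :=
  ENNReal.toReal_pos h.ne' (measure_ne_top P _)

lemma Psip_mul_Pip (h : 0 < P {ω | V ω > y}) : Psip P V y * Pip P V y = Phip P V y :=
  div_mul_cancel₀ _ (Pip_pos h).ne'

lemma le_Psip (hV : Integrable V P) (h : 0 < P {ω | V ω > y}) : y ≤ Psip P V y :=
  (le_div_iff₀ (Pip_pos h)).mpr <| mul_measureReal_le_setIntegral hV <|
    (ae_restrict_mem₀ (nullMeasurableSet_setOf_gt hV y)).mono fun _ hω => le_of_lt hω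

lemma Psip_le (hV : Integrable V P) (hVM : ∀ᵐ ω ∂P, V ω ≤ M) (h : 0 < P {ω | V ω > y}) :
    Psip P V y ≤ M :=
  (div_le_iff₀ (Pip_pos h)).mpr <| setIntegral_le_mul_measureReal hV <| ae_restrict_of_ae hVM

lemma setIntegral_le_Psip_mul (hV : Integrable V P) (h : 0 < P {ω | V ω > y}) {T : Set Ω}
    (hT : NullMeasurableSet T P) (hyT : {ω | V ω > y} ⊆ T) :
    ∫ ω in T, V ω ∂P ≤ Psip P V y * P.real T := by
  have hS := nullMeasurableSet_setOf_gt hV y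
  have hrest : ∀ᵐ ω ∂P.restrict (T \ {ω | V ω > y}), V ω ≤ Psip P V y := by
    filter_upwards [ae_restrict_mem₀ (hT.diff hS)] with ω hω
    exact (not_lt.mp hω.2).trans (le_Psip hV h)
  rw [← integral_inter_add_sdiff₀ hS hV.integrableOn, ← measureReal_inter_add_sdiff₀ (s := T) hS,
    inter_eq_right.mpr hyT, mul_add]
  exact add_le_add (Psip_mul_Pip h).ge (setIntegral_le_mul_measureReal hV hrest)

lemma Psip_le_Psip (hV : Integrable V P) (hyz : y ≤ z) (h : 0 < P {ω | V ω > z}) :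
    Psip P V y ≤ Psip P V z := by
  have hsub : {ω | V ω > z} ⊆ {ω | V ω > y} := fun _ hω => hyz.trans_lt hω
  exact (div_le_iff₀ (Pip_pos (h.trans_le (measure_mono hsub)))).mpr
    (setIntegral_le_Psip_mul hV h (nullMeasurableSet_setOf_gt hV y) hsub)

omit [IsFiniteMeasure P] in
lemma integral_le_Psip [IsProbabilityMeasure P] (hV : Integrable V P) (h : 0 < P {ω | V ω > y}) :
    ∫ ω, V ω ∂P ≤ Psip P V y := by
  have hle := setIntegral_le_Psip_mul hV h MeasurableSet.univ.nullMeasurableSet (subset_univ _)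
  rwa [setIntegral_univ, probReal_univ, mul_one] at hle

lemma Phip_sub_mem_Icc (hV : Integrable V P) (hyz : y ≤ z) :
    Phip P V y - Phip P V z ∈
      Icc (y * (Pip P V y - Pip P V z)) (z * (Pip P V y - Pip P V z)) := by
  have hsub : {ω | V ω > z} ⊆ {ω | V ω > y} := fun _ hω => hyz.trans_lt hω
  have hSy := nullMeasurableSet_setOf_gt hV y
  have hSz := nullMeasurableSet_setOf_gt hV z
  have hPip : Pip P V y - Pip P V z = P.real ({ω | V ω > y} \ {ω | V ω > z}) := by
    have h := measureReal_inter_add_sdiff₀ (s := {ω | V ω > y}) hSz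
    rw [inter_eq_right.mpr hsub] at h
    exact sub_eq_of_eq_add' h.symm
  have hmem := ae_restrict_mem₀ (hSy.diff hSz)
  rw [hPip, Phip, Phip, ← setIntegral_sdiff₀ hSz hV.integrableOn hsub]
  exact ⟨mul_measureReal_le_setIntegral hV (hmem.mono fun _ hω => le_of_lt hω.1),
    setIntegral_le_mul_measureReal hV (hmem.mono fun _ hω => not_lt.mp hω.2)⟩

lemma abs_Phip_sub_sub_mul_le (hV : Integrable V P) (y z : ℝ) :
    |Phip P V z - Phip P V y - y * (Pip P V z - Pip P V y)| ≤
      |Pip P V z - Pip P V y| * |z - y| := by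
  have hle := le_abs_self ((Pip P V z - Pip P V y) * (z - y))
  have hneg := neg_abs_le ((Pip P V z - Pip P V y) * (z - y))
  rw [← abs_mul, abs_le]
  rcases le_total y z with hyz | hzy
  · obtain ⟨hlower, hupper⟩ := Phip_sub_mem_Icc hV hyz
    constructor <;> linarith
  · obtain ⟨hlower, hupper⟩ := Phip_sub_mem_Icc hV hzy
    constructor <;> linarith

lemma hasDerivAt_Phip {p : ℝ} (hV : Integrable V P) (h : HasDerivAt (Pip P V) p y) :
    HasDerivAt (Phip P V) (y * p) y := by
  have hrem : HasDerivAt (fun z => Phip P V z - y * Pip P V z) 0 y := by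
    refine .of_isLittleO (Asymptotics.isLittleO_iff.mpr fun c hc => ?_)
    filter_upwards [Metric.continuousAt_iff'.mp h.continuousAt c hc] with z hz
    calc ‖Phip P V z - y * Pip P V z - (Phip P V y - y * Pip P V y) - (z - y) • (0 : ℝ)‖
        = |Phip P V z - Phip P V y - y * (Pip P V z - Pip P V y)| := by
          rw [smul_zero, Real.norm_eq_abs]
          ring_nf
      _ ≤ |Pip P V z - Pip P V y| * |z - y| := abs_Phip_sub_sub_mul_le hV y z
      _ ≤ c * ‖z - y‖ := by
          rw [← Real.dist_eq, Real.norm_eq_abs]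
          gcongr
  simpa using hrem.fun_add (h.const_mul y)

lemma differentiableAt_Psip (hV : Integrable V P) (hy : 0 < P {ω | V ω > y})
    (h : DifferentiableAt ℝ (Pip P V) y) : DifferentiableAt ℝ (Psip P V) y :=
  (hasDerivAt_Phip hV h.hasDerivAt).differentiableAt.div h (Pip_pos hy).ne'

lemma tendsto_sub_Psip_div_sub (hV : Integrable V P) (hVM : ∀ᵐ ω ∂P, V ω ≤ M)
    (hpos : ∀ y < M, 0 < P {ω | V ω > y})
    (hdiff : ∀ᶠ y in 𝓝[<] M, DifferentiableAt ℝ (Pip P V) y)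
    (hL : Tendsto (deriv (Psip P V)) (𝓝[<] M) (𝓝 L)) :
    Tendsto (fun y => (M - Psip P V y) / (M - y)) (𝓝[<] M) (𝓝 L) := by
  have hlt : ∀ᶠ y in 𝓝[<] M, y < M := eventually_mem_nhdsWithin
  have hid : Tendsto (fun y => M - y) (𝓝[<] M) (𝓝 0) :=
    ((continuous_sub_left M).tendsto' M 0 (sub_self M)).mono_left nhdsWithin_le_nhds
  refine deriv.lhopital_zero_nhdsLT ?_ (by simp) ?_ hid (by simpa using hL)
  · filter_upwards [hdiff, hlt] with y hdiff hy
    exact (differentiableAt_Psip hV (hpos y hy) hdiff).const_sub M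
  · refine tendsto_of_tendsto_of_tendsto_of_le_of_le' tendsto_const_nhds hid ?_ ?_
    · filter_upwards [hlt] with y hy using sub_nonneg.mpr (Psip_le hV hVM (hpos y hy))
    · filter_upwards [hlt] with y hy using sub_le_sub_left (le_Psip hV (hpos y hy)) M

lemma mem_Icc_of_tendsto_sub_Psip_div_sub (hV : Integrable V P) (hVM : ∀ᵐ ω ∂P, V ω ≤ M)
    (hpos : ∀ y < M, 0 < P {ω | V ω > y})
    (hL : Tendsto (fun y => (M - Psip P V y) / (M - y)) (𝓝[<] M) (𝓝 L)) : L ∈ Icc 0 1 := by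
  refine isClosed_Icc.mem_of_tendsto hL ?_
  filter_upwards [eventually_mem_nhdsWithin] with y hy
  have hy' : 0 < M - y := sub_pos.mpr hy
  exact ⟨div_nonneg (sub_nonneg.mpr (Psip_le hV hVM (hpos y hy))) hy'.le,
    div_le_one_of_le₀ (sub_le_sub_left (le_Psip hV (hpos y hy)) M) hy'.le⟩

end truncatedMean

theorem stmt15_general {Ω : Type*} [MeasurableSpace Ω] {P : Measure Ω} [IsProbabilityMeasure P]
    {V : Ω → ℝ} (hV : Integrable V P) {M : ℝ} (hVM : ∀ᵐ ω ∂P, V ω ≤ M)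
    (hpos : ∀ y < M, 0 < P {ω | V ω > y}) {σ : ℝ} (hσ : 0 < σ) {N : ℕ} (hN : 2 ≤ N) {L : ℝ}
    (hL : Tendsto (fun y => (M - Psip P V y) / (M - y)) (𝓝[<] M) (𝓝 L)) {R : ℝ → ℝ}
    (hRm : Monotone R) (hRlt : ∀ x, R x < M) (hRtop : Tendsto R atTop (𝓝 M))
    (hRsol : SolvesCp P V σ N R) :
    IsRegularlyVarying (fun x => M - R x) ((L - 1) / (1 - L / N)) := by
  have hnull := nullSingletonClass_centeredGaussian hσ
  have hN1 : (1 : ℝ) / N < 1 := by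
    rw [one_div]
    exact inv_lt_one_of_one_lt₀ (by exact_mod_cast hN)
  have hΨ : Monotone fun y => Psip P V (R y) := fun _ z hyz =>
    Psip_le_Psip hV (hRm hyz) (hpos _ (hRlt z))
  have hmem : ∀ y, Psip P V (R y) ∈ Icc (∫ ω, V ω ∂P) M := fun y =>
    ⟨integral_le_Psip hV (hpos _ (hRlt y)), Psip_le hV hVM (hpos _ (hRlt y))⟩
  have hLN : |L| * (1 / N) < 1 := by
    obtain ⟨hL0, hL1⟩ := mem_Icc_of_tendsto_sub_Psip_div_sub hV hVM hpos hL
    rw [abs_of_nonneg hL0]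
    exact (mul_le_of_le_one_left (by positivity) hL1).trans_lt hN1
  have hG := hRsol.const_sub_eq_blend hσ (by lia) hΨ hmem
  have hlim : Tendsto (fun x => (M - Psip P V (R x)) / (M - R x)) atTop (𝓝 L) :=
    hL.comp (tendsto_nhdsWithin_iff.mpr ⟨hRtop, .of_forall hRlt⟩)
  rw [hG, ← one_div_mul_eq_div _ L]
  exact isRegularlyVarying_blend_bismoothing (integrable_sq_centeredGaussian σ)
    (fun _ _ hxy => sub_le_sub_left (hΨ hxy) M)
    (fun y => ⟨sub_nonneg.mpr (hmem y).2, sub_le_sub_left (hmem y).1 M⟩)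
    (by positivity) hN1 hLN (fun x _ => congrFun hG x ▸ sub_pos.mpr (hRlt x))
    (hlim.congr fun x => by rw [← congrFun hG x])

/-- If `N ≥ 2`, `Π⁺` is `C¹` on `(m,M)` and `Ψ⁺ₓ(M) = lim_{x→M⁻} (Ψ⁺)'(x)` exists,
then for any nondecreasing solution `R` of (C⁺) with `R < M` and `R → M` at `∞`, the function
`G = M − R` is regularly varying at `∞` of index `ρ⁺ = (Ψ⁺ₓ(M) − 1)/(1 − Ψ⁺ₓ(M)/N)`. -/
theorem stmt15 {Ω : Type*} [MeasurableSpace Ω] (P : Measure Ω) [IsProbabilityMeasure P]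
    (V : Ω → ℝ) (hVmeas : Measurable V) (hV : Integrable V P)
    (m M : ℝ) (hsupp : SuppIoo P V m M)
    (σ : ℝ) (hσ : 0 < σ) (N : ℕ) (hN : 2 ≤ N)
    (hC1 : ContDiffOn ℝ 1 (Pip P V) (Set.Ioo m M))
    (L : ℝ) (hL : Tendsto (deriv (Psip P V)) (nhdsWithin M (Set.Iio M)) (nhds L))
    (R : ℝ → ℝ) (hRm : Monotone R) (hRr : ∀ x, R x ∈ Set.Icc m M)
    (hRlt : ∀ x, R x < M) (hRtop : Tendsto R atTop (nhds M))
    (hRsol : SolvesCp P V σ N R) :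
    ∀ x : ℝ, 0 < x →
      Tendsto (fun α : ℝ => (M - R (α * x)) / (M - R α)) atTop
        (nhds (x ^ ((L - 1) / (1 - L / (N:ℝ))))) :=
  stmt15_general hV (hsupp.2.1.mono fun _ hω => hω.2) hsupp.2.2.1 hσ hN
    (tendsto_sub_Psip_div_sub hV (hsupp.2.1.mono fun _ hω => hω.2) hsupp.2.2.1
      (mem_of_superset (Ioo_mem_nhdsLT hsupp.1) fun _ hy =>
        (hC1.differentiableOn one_ne_zero).differentiableAt (Ioo_mem_nhds hy.1 hy.2)) hL)
    hRm hRlt hRtop hRsol
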